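/- Let a, b, c, d : ℝ → ℝ be continuous and let A, B, C : ℝ → ℝ be continuously differentiable functions satisfying the system A′ = 2c A − 2a B, B′ = 2b A − 2d B, C′ = (c − d) C. Let ψ : ℝ × ℝ → ℂ be smooth (C² in x, C¹ in t, with ψ_x also C¹ in t and ∂_t∂_xψ = ∂_x∂_tψ) and satisfy i ∂ψ/∂t = Hψ. Then the function ψ₁(x,t) := −i A(t) ψ_x(x,t) + B(t) x ψ(x,t) + C(t) ψ(x,t), i.e. ψ₁ = (A p + B x + C)ψ with p = −i∂/∂x, satisfies the adjoint equation i ∂ψ₁/∂t = H†ψ₁. -/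

import Mathlib

/-!
Write `P = A p + B x + C`. Commuting `P` past `p` and `x` gives the operator identity
`H† P = P H + i P'`, where `P'` has the coefficients `A' = 2cA - 2aB`, `B' = 2bA - 2dB`,
`C' = (c - d) C` of the first-order system. Along a solution of `i ψ_t = H ψ` the Leibniz rule
gives `i (P ψ)_t = i P' ψ + P (i ψ_t) = (i P' + P H) ψ`, which is therefore `H† (P ψ)`.
-/

open Complex (I)

/-- The quadratic Hamiltonian `a p² + b x² + c p x + d x p` with `p = -i ∂/∂x`, at a fixed time.
When the coefficients are real, its formal adjoint `H†` is obtained by exchanging `c` and `d`. -/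
noncomputable def quadraticHamiltonian (a b c d : ℂ) (f : ℝ → ℂ) (x : ℝ) : ℂ :=
  -a * deriv (deriv f) x + b * (x : ℂ) ^ 2 * f x
    - I * c * (f x + (x : ℂ) * deriv f x) - I * d * ((x : ℂ) * deriv f x)

/-- The first-order operator `A p + B x + C` with `p = -i ∂/∂x`, at a fixed time; it is the linear
dynamical invariant when its coefficients evolve by the first-order system. -/
noncomputable def linearInvariant (A B C : ℂ) (f : ℝ → ℂ) (x : ℝ) : ℂ :=
  -I * A * deriv f x + B * (x : ℂ) * f x + C * f x

section FixedTime

variable {f : ℝ → ℂ} {x : ℝ}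

theorem linearInvariant_const_mul (A B C k : ℂ) (f : ℝ → ℂ) (x : ℝ) :
    linearInvariant A B C (fun y => k * f y) x = k * linearInvariant A B C f x := by
  simp only [linearInvariant, deriv_const_mul_field]
  ring

theorem hasDerivAt_linearInvariant (A B C : ℂ) (hf : DifferentiableAt ℝ f x)
    (hf' : DifferentiableAt ℝ (deriv f) x) :
    HasDerivAt (linearInvariant A B C f) (linearInvariant A B C (deriv f) x + B * f x) x := by
  have hx : HasDerivAt (fun y : ℝ => (y : ℂ)) 1 x := Complex.ofRealCLM.hasDerivAt
  refine (((hf'.hasDerivAt.const_mul (-I * A)).add ((hx.const_mul B).mul hf.hasDerivAt)).add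
    (hf.hasDerivAt.const_mul C)).congr_deriv ?_
  simp only [linearInvariant]
  ring

theorem deriv_deriv_linearInvariant (A B C : ℂ) (hf : Differentiable ℝ f)
    (hf' : Differentiable ℝ (deriv f)) (hf'' : DifferentiableAt ℝ (deriv (deriv f)) x) :
    deriv (deriv (linearInvariant A B C f)) x =
      linearInvariant A B C (deriv (deriv f)) x + 2 * B * deriv f x := by
  have deriv_eq : deriv (linearInvariant A B C f) =
      fun y => linearInvariant A B C (deriv f) y + B * f y :=
    funext fun y => (hasDerivAt_linearInvariant A B C (hf y) (hf' y)).deriv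
  rw [deriv_eq, ((hasDerivAt_linearInvariant A B C (hf' x) hf'').fun_add
    ((hf x).hasDerivAt.const_mul B)).deriv]
  ring

theorem hasDerivAt_quadraticHamiltonian (a b c d : ℂ) (hf : DifferentiableAt ℝ f x)
    (hf' : DifferentiableAt ℝ (deriv f) x) (hf'' : DifferentiableAt ℝ (deriv (deriv f)) x) :
    HasDerivAt (quadraticHamiltonian a b c d f)
      (quadraticHamiltonian a b c d (deriv f) x + 2 * b * x * f x - I * (c + d) * deriv f x) x := by
  have hx : HasDerivAt (fun y : ℝ => (y : ℂ)) 1 x := Complex.ofRealCLM.hasDerivAt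
  have hxf' := hx.mul hf'.hasDerivAt
  refine ((((hf''.hasDerivAt.const_mul (-a)).add
    (((hx.pow 2).const_mul b).mul hf.hasDerivAt)).sub
    ((hf.hasDerivAt.add hxf').const_mul (I * c))).sub (hxf'.const_mul (I * d))).congr_deriv ?_
  simp only [quadraticHamiltonian, Pi.pow_apply]
  push_cast
  ring

theorem quadraticHamiltonian_linearInvariant (a b c d A B C : ℂ) (hf : Differentiable ℝ f)
    (hf' : Differentiable ℝ (deriv f)) (hf'' : DifferentiableAt ℝ (deriv (deriv f)) x) :
    quadraticHamiltonian a b d c (linearInvariant A B C f) x =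
      linearInvariant A B C (quadraticHamiltonian a b c d f) x +
        I * linearInvariant (2 * c * A - 2 * a * B) (2 * b * A - 2 * d * B) ((c - d) * C) f x := by
  rw [quadraticHamiltonian, deriv_deriv_linearInvariant A B C hf hf' hf'',
    (hasDerivAt_linearInvariant A B C (hf x) (hf' x)).deriv]
  simp only [linearInvariant, (hasDerivAt_quadraticHamiltonian a b c d (hf x) (hf' x) hf'').deriv]
  simp only [quadraticHamiltonian]
  linear_combination (-2 * a * B * deriv f x) * Complex.I_sq

end FixedTime

theorem hasDerivAt_linearInvariant_time {A B C : ℝ → ℂ} {A' B' C' : ℂ} {ψ : ℝ → ℝ → ℂ}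
    {ψt : ℝ → ℂ} {x t : ℝ} (hA : HasDerivAt A A' t) (hB : HasDerivAt B B' t)
    (hC : HasDerivAt C C' t) (hψ : HasDerivAt (fun s => ψ x s) (ψt x) t)
    (hψx : HasDerivAt (fun s => deriv (fun y => ψ y s) x) (deriv ψt x) t) :
    HasDerivAt (fun s => linearInvariant (A s) (B s) (C s) (fun y => ψ y s) x)
      (linearInvariant A' B' C' (fun y => ψ y t) x + linearInvariant (A t) (B t) (C t) ψt x) t := by
  refine ((((hA.const_mul (-I)).mul hψx).add ((hB.mul_const (x : ℂ)).mul hψ)).add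
    (hC.mul hψ)).congr_deriv ?_
  simp only [linearInvariant]
  ring

/-- Complex `A`, `B`, `C` include ladder operators. For complex `a`, `b`, `c`, `d` the operator on
the right-hand side is `H` with `c` and `d` exchanged, which need not be the adjoint of `H`. -/
theorem statement_1_general {a b c d A B C : ℝ → ℂ}
    (hA : ∀ t, HasDerivAt A (2 * c t * A t - 2 * a t * B t) t)
    (hB : ∀ t, HasDerivAt B (2 * b t * A t - 2 * d t * B t) t)
    (hC : ∀ t, HasDerivAt C ((c t - d t) * C t) t)
    {ψ ψx ψxx ψxxx ψt ψxt ψ₁ : ℝ → ℝ → ℂ}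
    (hψx : ∀ x t, HasDerivAt (fun y => ψ y t) (ψx x t) x)
    (hψxx : ∀ x t, HasDerivAt (fun y => ψx y t) (ψxx x t) x)
    (hψxxx : ∀ x t, HasDerivAt (fun y => ψxx y t) (ψxxx x t) x)
    (hψt : ∀ x t, HasDerivAt (fun s => ψ x s) (ψt x t) t)
    (hψxt : ∀ x t, HasDerivAt (fun s => ψx x s) (ψxt x t) t)
    (hmix : ∀ x t, HasDerivAt (fun y => ψt y t) (ψxt x t) x)
    (hSE : ∀ x t, I * ψt x t =
        -a t * ψxx x t + b t * (x : ℂ) ^ 2 * ψ x t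
          - I * c t * (ψ x t + (x : ℂ) * ψx x t) - I * d t * ((x : ℂ) * ψx x t))
    (hψ₁ : ∀ x t, ψ₁ x t =
        -I * A t * ψx x t + B t * (x : ℂ) * ψ x t + C t * ψ x t) (x t : ℝ) :
    I * deriv (fun s => ψ₁ x s) t =
      quadraticHamiltonian (a t) (b t) (d t) (c t) (fun y => ψ₁ y t) x := by
  obtain rfl : ψx = fun x t => deriv (fun y => ψ y t) x := funext₂ fun x t => (hψx x t).deriv.symm
  obtain rfl : ψxx = fun x t => deriv (deriv fun y => ψ y t) x :=
    funext₂ fun x t => (hψxx x t).deriv.symm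
  obtain rfl : ψ₁ = fun x t => linearInvariant (A t) (B t) (C t) (fun y => ψ y t) x := funext₂ hψ₁
  have schrodinger : (fun y => I * ψt y t) =
      quadraticHamiltonian (a t) (b t) (c t) (d t) fun y => ψ y t := funext fun y => hSE y t
  have leibniz := hasDerivAt_linearInvariant_time (ψt := fun y => ψt y t) (hA t) (hB t) (hC t)
    (hψt x t) ((hmix x t).deriv.symm ▸ hψxt x t)
  have intertwining := quadraticHamiltonian_linearInvariant (a t) (b t) (c t) (d t)
    (A t) (B t) (C t) (fun y => (hψx y t).differentiableAt)
    (fun y => (hψxx y t).differentiableAt) (hψxxx x t).differentiableAt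
  rw [leibniz.deriv, intertwining, ← schrodinger, linearInvariant_const_mul]
  ring

/-- If A, B, C satisfy A′ = 2cA − 2aB, B′ = 2bA − 2dB, C′ = (c−d)C and
ψ solves i ψ_t = Hψ, then ψ₁ = (A p + B x + C)ψ = −iAψ_x + Bxψ + Cψ solves the
adjoint equation i (ψ₁)_t = H† ψ₁. -/
theorem statement_1
    (a b c d : ℝ → ℝ) (ha : Continuous a) (hb : Continuous b)
    (hc : Continuous c) (hd : Continuous d)
    (A B C : ℝ → ℝ)
    -- the first-order system for the coefficients of the linear invariant
    (hA : ∀ t, HasDerivAt A (2 * c t * A t - 2 * a t * B t) t)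
    (hB : ∀ t, HasDerivAt B (2 * b t * A t - 2 * d t * B t) t)
    (hC : ∀ t, HasDerivAt C ((c t - d t) * C t) t)
    (ψ ψx ψxx ψxxx ψt ψxt : ℝ → ℝ → ℂ)
    -- smoothness of ψ in x (up to the orders appearing)
    (hψx : ∀ x t, HasDerivAt (fun x' => ψ x' t) (ψx x t) x)
    (hψxx : ∀ x t, HasDerivAt (fun x' => ψx x' t) (ψxx x t) x)
    (hψxxx : ∀ x t, HasDerivAt (fun x' => ψxx x' t) (ψxxx x t) x)
    -- smoothness in t: ψ and ψ_x are C¹ in t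
    (hψt : ∀ x t, HasDerivAt (fun t' => ψ x t') (ψt x t) t)
    (hψxt : ∀ x t, HasDerivAt (fun t' => ψx x t') (ψxt x t) t)
    -- equality of mixed partials: ∂_t ∂_x ψ = ∂_x ∂_t ψ
    (hmix : ∀ x t, HasDerivAt (fun x' => ψt x' t) (ψxt x t) x)
    -- the time-dependent Schrödinger equation i ψ_t = Hψ
    (hSE : ∀ x t, Complex.I * ψt x t =
        -(a t : ℂ) * ψxx x t + (b t : ℂ) * (x : ℂ) ^ 2 * ψ x t
          - Complex.I * (c t : ℂ) * (ψ x t + (x : ℂ) * ψx x t)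
          - Complex.I * (d t : ℂ) * ((x : ℂ) * ψx x t))
    (ψ₁ : ℝ → ℝ → ℂ)
    (hψ₁ : ∀ x t, ψ₁ x t =
        -Complex.I * (A t : ℂ) * ψx x t + (B t : ℂ) * (x : ℂ) * ψ x t
          + (C t : ℂ) * ψ x t) :
    -- the adjoint equation i (ψ₁)_t = H† ψ₁
    ∀ x t, Complex.I * deriv (fun t' => ψ₁ x t') t =
        -(a t : ℂ) * deriv (fun x' => deriv (fun x'' => ψ₁ x'' t) x') x
          + (b t : ℂ) * (x : ℂ) ^ 2 * ψ₁ x t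
          - Complex.I * (d t : ℂ) * (ψ₁ x t + (x : ℂ) * deriv (fun x' => ψ₁ x' t) x)
          - Complex.I * (c t : ℂ) * ((x : ℂ) * deriv (fun x' => ψ₁ x' t) x) :=
  statement_1_general (fun t => mod_cast (hA t).ofReal_comp) (fun t => mod_cast (hB t).ofReal_comp)
    (fun t => mod_cast (hC t).ofReal_comp) hψx hψxx hψxxx hψt hψxt hmix hSE hψ₁
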